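/- There exists a Turing machine with 47 states and 10 tape symbols which, started on the blank tape, halts, and the number of steps it performs before halting is greater than n(4). -/

import Mathlib

/-- `friedmanBlock s i` is the block `s_i s_{i+1} … s_{2i}` of the word `s`
(1-based indices); it has length `i + 1` when `2*i ≤ s.length`. -/
def friedmanBlock {α : Type} (s : List α) (i : ℕ) : List α :=
  (s.drop (i - 1)).take (i + 1)

/-- Friedman's property (*): there are no indices `1 ≤ i < j ≤ n/2` such that
`s^(i)` is a (scattered) subword of `s^(j)`.  Note `j ≤ n/2 ↔ 2*j ≤ n`. -/
def SatisfiesStar {α : Type} (s : List α) : Prop :=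
  ∀ i j : ℕ, 1 ≤ i → i < j → 2 * j ≤ s.length →
    ¬ (friedmanBlock s i).Sublist (friedmanBlock s j)

/-- `friedmanN k` = n(k), the length of a longest word over a `k`-letter
alphabet satisfying (*). -/
noncomputable def friedmanN (k : ℕ) : ℕ :=
  sSup {n : ℕ | ∃ s : List (Fin k), s.length = n ∧ SatisfiesStar s}

open Turing

/-- Iterated `TM0.step`: run the machine for `n` steps, returning `none` if it
halts strictly before that. -/
def multistep {Γ Λ : Type} [Inhabited Γ] [Inhabited Λ]
    (M : TM0.Machine Γ Λ) : ℕ → TM0.Cfg Γ Λ → Option (TM0.Cfg Γ Λ)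
  | 0, c => some c
  | n + 1, c => (TM0.step M c).bind (multistep M n)

/-- Started from configuration `c₀`, the machine reaches after exactly `T`
steps a configuration on which the transition function is undefined. -/
def HaltsFromIn {Γ Λ : Type} [Inhabited Γ] [Inhabited Λ]
    (M : TM0.Machine Γ Λ) (c₀ : TM0.Cfg Γ Λ) (T : ℕ) : Prop :=
  ∃ c, multistep M T c₀ = some c ∧ TM0.step M c = none

/-- The machine halts on the blank tape in exactly `T` steps. -/
def HaltsIn {Γ Λ : Type} [Inhabited Γ] [Inhabited Λ]
    (M : TM0.Machine Γ Λ) (T : ℕ) : Prop :=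
  HaltsFromIn M (TM0.init []) T


namespace Friedman

/-- Structured tape symbols. -/
inductive Sym
  | blank | sep | lt (a : Fin 4) | mk (a : Fin 4)

/-- Structured states. -/
inductive St
  | I0 | I1 | I2 | U | K | P | E | G | H | C | R (a : Fin 4) | S (a : Fin 4)
  | L1 | L2 | L3 | V | W2 | W4 | X | B | B1 | D1 | D2

inductive Act
  | left | right | write (x : Sym)

def encS : Sym → Fin 10
  | .blank => 0
  | .sep => 1
  | .lt a => ⟨2 + a.val, by omega⟩
  | .mk a => ⟨6 + a.val, by omega⟩

def decS (n : Fin 10) : Sym :=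
  if n.val = 0 then .blank
  else if n.val = 1 then .sep
  else if n.val < 6 then .lt (Fin.ofNat 4 (n.val - 2))
  else .mk (Fin.ofNat 4 (n.val - 6))

theorem decS_encS (x : Sym) : decS (encS x) = x := by
  rcases x with _ | _ | a | a
  · rfl
  · rfl
  · fin_cases a <;> rfl
  · fin_cases a <;> rfl

def encQ : St → Fin 47
  | .I0 => 0 | .I1 => 1 | .I2 => 2 | .U => 3 | .K => 4 | .P => 5 | .E => 6 | .G => 7
  | .H => 8 | .C => 9 | .L1 => 10 | .L2 => 11 | .L3 => 12 | .V => 13 | .W2 => 14 | .W4 => 15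
  | .X => 16 | .B => 17 | .B1 => 18 | .D1 => 19 | .D2 => 20
  | .R a => ⟨21 + a.val, by omega⟩
  | .S a => ⟨25 + a.val, by omega⟩

def decQ (n : Fin 47) : St :=
  match n.val with
  | 0 => .I0 | 1 => .I1 | 2 => .I2 | 3 => .U | 4 => .K | 5 => .P | 6 => .E | 7 => .G
  | 8 => .H | 9 => .C | 10 => .L1 | 11 => .L2 | 12 => .L3 | 13 => .V | 14 => .W2 | 15 => .W4
  | 16 => .X | 17 => .B | 18 => .B1 | 19 => .D1 | 20 => .D2
  | 21 => .R 0 | 22 => .R 1 | 23 => .R 2 | 24 => .R 3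
  | 25 => .S 0 | 26 => .S 1 | 27 => .S 2 | 28 => .S 3
  | _ => .I0

theorem decQ_encQ (x : St) : decQ (encQ x) = x := by
  cases x with
  | R a => fin_cases a <;> rfl
  | S a => fin_cases a <;> rfl
  | _ => rfl

/-- The transition table. -/
def delta : St → Sym → Option (St × Act)
  -- initialisation: write `# 0 0`
  | .I0, .blank => some (.I1, .write .sep)
  | .I1, .sep => some (.I1, .right)
  | .I1, .blank => some (.I2, .write (.lt 0))
  | .I2, .lt _ => some (.I2, .right)
  | .I2, .blank => some (.U, .write (.lt 0))
  -- unmark moving right, then start the check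
  | .U, .mk a => some (.U, .write (.lt a))
  | .U, .lt _ => some (.U, .right)
  | .U, .sep => some (.U, .right)
  | .U, .blank => some (.K, .left)
  -- skip the last block
  | .K, .lt _ => some (.K, .left)
  | .K, .sep => some (.P, .left)
  -- at the end of the next block to be compared
  | .P, .lt a => some (.R a, .write (.mk a))
  | .P, .blank => some (.E, .right)
  -- carry a letter to the right end
  | .R a, .blank => some (.S a, .left)
  | .R a, _ => some (.R a, .right)
  -- look for the letter in the last block
  | .S a, .mk _ => some (.S a, .left)
  | .S a, .lt b => if a = b then some (.L1, .write (.mk b)) else some (.S a, .write (.mk b))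
  | .S _, .sep => some (.V, .right)
  -- found: go back
  | .L1, .mk _ => some (.L2, .left)
  | .L2, .lt _ => some (.L2, .left)
  | .L2, .sep => some (.L2, .left)
  | .L2, .mk _ => some (.L3, .left)
  | .L3, .mk _ => some (.L3, .left)
  | .L3, .lt a => some (.R a, .write (.mk a))
  | .L3, .sep => some (.X, .right)
  -- not found: unmark everything and pass to the next block
  | .V, .mk a => some (.V, .write (.lt a))
  | .V, .lt _ => some (.V, .right)
  | .V, .blank => some (.W2, .left)
  | .W2, .lt _ => some (.W2, .left)
  | .W2, .sep => some (.W2, .left)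
  | .W2, .mk a => some (.W4, .write (.lt a))
  | .W4, .mk a => some (.W4, .write (.lt a))
  | .W4, .lt _ => some (.W4, .left)
  | .W4, .sep => some (.P, .left)
  -- embedding found: unmark everything, then backtrack
  | .X, .mk a => some (.X, .write (.lt a))
  | .X, .lt _ => some (.X, .right)
  | .X, .sep => some (.X, .right)
  | .X, .blank => some (.B1, .write .blank)
  -- no embedding found: append a block of zeros, one longer than the last one
  | .E, .lt _ => some (.E, .right)
  | .E, .sep => some (.E, .right)
  | .E, .blank => some (.G, .write .sep)
  | .G, .blank => some (.H, .write (.lt 0))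
  | .G, _ => some (.G, .right)
  | .H, .lt _ => some (.H, .left)
  | .H, .sep => some (.C, .left)
  | .C, .mk _ => some (.C, .left)
  | .C, .lt a => some (.G, .write (.mk a))
  | .C, .sep => some (.U, .right)
  -- odometer
  | .B1, .lt _ => some (.B, .left)
  | .B1, .blank => some (.B, .left)
  | .B, .lt a => if a = 3 then some (.B1, .write (.lt 0)) else some (.U, .write (.lt (a + 1)))
  | .B, .sep => some (.D1, .right)
  | .D1, .lt _ => some (.D1, .right)
  | .D1, .blank => some (.D2, .left)
  | .D2, .lt _ => some (.D2, .write .blank)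
  | .D2, .blank => some (.D2, .left)
  | .D2, .sep => some (.B1, .write .blank)
  | _, _ => none

def encA : Act → TM0.Stmt (Fin 10)
  | .left => .move .left
  | .right => .move .right
  | .write x => .write (encS x)

def mach : TM0.Machine (Fin 10) (Fin 47) := fun q s =>
  (delta (decQ q) (decS s)).map fun p => (encQ p.1, encA p.2)

/-- Configuration: `L` is the tape to the left of the head (nearest first), `R` starts at
the head. -/
def cfg (q : St) (L R : List Sym) : TM0.Cfg (Fin 10) (Fin 47) :=
  ⟨encQ q, Tape.mk' (ListBlank.mk (L.map encS)) (ListBlank.mk (R.map encS))⟩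

/-- Configuration whose head is on the first symbol of `A`, which continues to the left. -/
def cfgL (q : St) (A R : List Sym) : TM0.Cfg (Fin 10) (Fin 47) :=
  cfg q A.tail ((A.head?.getD .blank) :: R)

theorem mk_blank (l : List (Fin 10)) : ListBlank.mk (l ++ [0]) = ListBlank.mk l := by
  symm
  apply Quotient.sound'
  exact Or.inl ⟨1, rfl⟩

theorem cfg_blankR (q L R) : cfg q L (R ++ [.blank]) = cfg q L R := by
  simp only [cfg, List.map_append, List.map_cons, List.map_nil, encS, mk_blank]

theorem cfg_blankL (q L R) : cfg q (L ++ [.blank]) R = cfg q L R := by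
  simp only [cfg, List.map_append, List.map_cons, List.map_nil, encS, mk_blank]

theorem cfgL_blankR (q A R) : cfgL q A (R ++ [.blank]) = cfgL q A R := by
  unfold cfgL
  rw [← List.cons_append, cfg_blankR]

theorem step_right {q x q'} (h : delta q x = some (q', .right)) (L R) :
    TM0.step mach (cfg q L (x :: R)) = some (cfg q' (x :: L) R) := by
  simp [TM0.step, cfg, mach, decQ_encQ, decS_encS, h, encA, Tape.mk', Tape.move]

theorem step_write {q x q' y} (h : delta q x = some (q', .write y)) (L R) :
    TM0.step mach (cfg q L (x :: R)) = some (cfg q' L (y :: R)) := by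
  simp [TM0.step, cfg, mach, decQ_encQ, decS_encS, h, encA, Tape.mk', Tape.write]

theorem step_left {q x q'} (h : delta q x = some (q', .left)) (A R) :
    TM0.step mach (cfgL q (x :: A) R) = some (cfgL q' A (x :: R)) := by
  rcases A with _ | ⟨a, A⟩ <;>
  simp [TM0.step, cfg, cfgL, mach, decQ_encQ, decS_encS, h, encA, Tape.mk', Tape.move]
  all_goals rfl

theorem step_none {q x} (h : delta q x = none) (L R) :
    TM0.step mach (cfg q L (x :: R)) = none := by
  simp [TM0.step, Tape.mk', cfg, mach, decQ_encQ, decS_encS, h]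

/-- `RG n c d`: the machine gets from `c` to `d` in at least `n` steps. -/
def RG (n : ℕ) (c d : TM0.Cfg (Fin 10) (Fin 47)) : Prop :=
  ∃ t, n ≤ t ∧ multistep mach t c = some d

theorem multistep_add (s t : ℕ) (c d) (h : multistep mach s c = some d) :
    multistep mach (s + t) c = multistep mach t d := by
  induction s generalizing c with
  | zero => simp [multistep] at h; simp [h]
  | succ s ih =>
    rw [show s + 1 + t = (s + t) + 1 by omega]
    simp only [multistep] at h ⊢
    cases hc : TM0.step mach c with
    | none => simp [hc] at h
    | some e =>
      simp only [hc, Option.bind_some] at h ⊢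
      exact ih e h

theorem RG.refl (c) : RG 0 c c := ⟨0, le_rfl, rfl⟩

theorem RG.trans {m n a b c} (h1 : RG m a b) (h2 : RG n b c) : RG (m + n) a c := by
  obtain ⟨s, hs, h1⟩ := h1
  obtain ⟨t, ht, h2⟩ := h2
  exact ⟨s + t, by omega, by rw [multistep_add _ _ _ _ h1, h2]⟩

theorem RG.mono {m n a b} (h : RG m a b) (hn : n ≤ m) : RG n a b := by
  obtain ⟨s, hs, h⟩ := h
  exact ⟨s, by omega, h⟩

theorem RG.trans0 {m n a b c} (h1 : RG m a b) (h2 : RG n b c) : RG n a c :=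
  (h1.trans h2).mono (by omega)

theorem RG.step {a b} (h : TM0.step mach a = some b) : RG 1 a b :=
  ⟨1, le_rfl, by simp [multistep, h]⟩

theorem goR {q x q'} (h : delta q x = some (q', .right)) (L R) :
    RG 1 (cfg q L (x :: R)) (cfg q' (x :: L) R) := .step (step_right h L R)
theorem goW {q x q' y} (h : delta q x = some (q', .write y)) (L R) :
    RG 1 (cfg q L (x :: R)) (cfg q' L (y :: R)) := .step (step_write h L R)
theorem goWL {q x q' y} (h : delta q x = some (q', .write y)) (L R) :
    RG 1 (cfgL q (x :: L) R) (cfgL q' (y :: L) R) := .step (step_write h L R)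
theorem goL {q x q'} (h : delta q x = some (q', .left)) (A R) :
    RG 1 (cfgL q (x :: A) R) (cfgL q' A (x :: R)) := .step (step_left h A R)

theorem cfg_end (q L) : cfg q L [] = cfg q L [.blank] := (cfg_blankR q L []).symm

/-- turn around at the right end -/
theorem endL {q q'} (h : delta q .blank = some (q', .left)) (A) :
    RG 1 (cfg q A []) (cfgL q' A []) := by
  rw [cfg_end]
  have := goL h A []
  rw [show [Sym.blank] = [] ++ [Sym.blank] from rfl, cfgL_blankR] at this
  exact this

theorem endW {q q' y} (h : delta q .blank = some (q', .write y)) (A) :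
    RG 1 (cfg q A []) (cfgL q' (y :: A) []) := by
  rw [cfg_end]
  exact goW h A []

theorem sweepR {q : St} (f : Sym → Sym) (xs L R : List Sym)
    (h : ∀ x ∈ xs, ∀ L R, RG 0 (cfg q L (x :: R)) (cfg q (f x :: L) R)) :
    RG 0 (cfg q L (xs ++ R)) (cfg q ((xs.map f).reverse ++ L) R) := by
  induction xs generalizing L with
  | nil => exact .refl _
  | cons x xs ih =>
    have h1 := h x (by simp) L (xs ++ R)
    have h2 := ih (f x :: L) (fun y hy => h y (by simp [hy]))
    simpa using h1.trans0 h2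

theorem sweepL {q : St} (f : Sym → Sym) (xs A R : List Sym)
    (h : ∀ x ∈ xs, ∀ A R, RG 0 (cfgL q (x :: A) R) (cfgL q A (f x :: R))) :
    RG 0 (cfgL q (xs ++ A) R) (cfgL q A ((xs.map f).reverse ++ R)) := by
  induction xs generalizing R with
  | nil => exact .refl _
  | cons x xs ih =>
    have h1 := h x (by simp) (xs ++ A) R
    have h2 := ih (f x :: R) (fun y hy => h y (by simp [hy]))
    simpa using h1.trans0 h2

/-- plain left sweep -/
theorem sweepL0 {q : St} (xs A R : List Sym)
    (h : ∀ x ∈ xs, delta q x = some (q, .left)) :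
    RG 0 (cfgL q (xs ++ A) R) (cfgL q A (xs.reverse ++ R)) := by
  have := sweepL (q := q) id xs A R (fun x hx A R => (goL (h x hx) A R).mono (by omega))
  simpa using this

/-- plain right sweep to the right end -/
theorem sweepR0 {q : St} (xs L : List Sym)
    (h : ∀ x ∈ xs, delta q x = some (q, .right)) :
    RG 0 (cfg q L xs) (cfg q (xs.reverse ++ L) []) := by
  have := sweepR (q := q) id xs L [] (fun x hx A R => (goR (h x hx) A R).mono (by omega))
  simpa using this

def unm : Sym → Sym
  | .mk a => .lt a
  | x => x

def isLt : Sym → Prop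
  | .lt _ => True
  | _ => False

def clean : Sym → Prop
  | .lt _ => True
  | .sep => True
  | _ => False

def nb : Sym → Prop
  | .blank => False
  | _ => True

/-- unmarking right sweep to the right end, for the states `U` and `X` -/
theorem sweepU {q : St} (hq : q = .U ∨ q = .X) (xs L : List Sym) (h : ∀ x ∈ xs, nb x) :
    RG 0 (cfg q L xs) (cfg q ((xs.map unm).reverse ++ L) []) := by
  have := sweepR (q := q) unm xs L [] (fun x hx L R => by
    have hx := h x hx
    rcases x with _ | _ | a | a
    · exact hx.elim
    · rcases hq with rfl | rfl <;> exact (goR rfl L R).mono (by omega)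
    · rcases hq with rfl | rfl <;> exact (goR rfl L R).mono (by omega)
    · rcases hq with rfl | rfl <;>
      exact (goW (y := .lt a) rfl L R).trans0 ((goR rfl L R).mono (by omega)))
  simpa using this

def lts (w : List (Fin 4)) : List Sym := w.map Sym.lt
def mks (w : List (Fin 4)) : List Sym := w.map Sym.mk

/-- Tape contents of a stack of blocks (last block first, every block read from right to left). -/
def stk : List (List (Fin 4)) → List Sym
  | [] => []
  | w :: L => lts w ++ .sep :: stk L

theorem unm_lts (w) : (lts w).map unm = lts w := by
  simp only [lts, List.map_map]; rfl
theorem unm_mks (w) : (mks w).map unm = lts w := by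
  simp only [lts, mks, List.map_map]; rfl
theorem unm_comp_lt : unm ∘ Sym.lt = Sym.lt := rfl
theorem unm_comp_mk : unm ∘ Sym.mk = Sym.lt := rfl
theorem unm_sep : unm .sep = .sep := rfl
theorem unm_clean (xs : List Sym) (h : ∀ x ∈ xs, clean x) : xs.map unm = xs := by
  induction xs with
  | nil => rfl
  | cons x xs ih =>
    rw [List.map_cons, ih (fun y hy => h y (by simp [hy]))]
    have := h x (by simp)
    rcases x with _ | _ | a | a <;> first | rfl | exact this.elim

theorem clean_lts (w) : ∀ x ∈ lts w, clean x := by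
  intro x hx
  obtain ⟨a, _, rfl⟩ := List.mem_map.1 hx
  trivial
theorem nb_lts (w) : ∀ x ∈ lts w, nb x := by
  intro x hx
  obtain ⟨a, _, rfl⟩ := List.mem_map.1 hx
  trivial
theorem nb_mks (w) : ∀ x ∈ mks w, nb x := by
  intro x hx
  obtain ⟨a, _, rfl⟩ := List.mem_map.1 hx
  trivial
theorem nb_of_clean {x} (h : clean x) : nb x := by
  rcases x with _ | _ | a | a <;> first | trivial
theorem clean_sep : clean .sep := trivial
theorem nb_sep : nb .sep := trivial

theorem clean_stk (L) : ∀ x ∈ stk L, clean x := by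
  induction L with
  | nil => simp [stk]
  | cons w L ih =>
    intro x hx
    simp only [stk, List.mem_append, List.mem_cons] at hx
    rcases hx with hx | rfl | hx
    · exact clean_lts w x hx
    · trivial
    · exact ih x hx

theorem goLs {q : St} (w) (h : ∀ a, delta q (.lt a) = some (q, .left)) (A R) :
    RG 0 (cfgL q (lts w ++ A) R) (cfgL q A ((lts w).reverse ++ R)) := by
  apply sweepL0
  intro x hx
  obtain ⟨a, _, rfl⟩ := List.mem_map.1 hx
  exact h a

theorem goMs {q : St} (w) (h : ∀ a, delta q (.mk a) = some (q, .left)) (A R) :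
    RG 0 (cfgL q (mks w ++ A) R) (cfgL q A ((mks w).reverse ++ R)) := by
  apply sweepL0
  intro x hx
  obtain ⟨a, _, rfl⟩ := List.mem_map.1 hx
  exact h a

theorem goCs {q : St} (xs : List Sym) (hx : ∀ x ∈ xs, clean x)
    (h : ∀ a, delta q (.lt a) = some (q, .left)) (h' : delta q .sep = some (q, .left)) (A R) :
    RG 0 (cfgL q (xs ++ A) R) (cfgL q A (xs.reverse ++ R)) := by
  apply sweepL0
  intro x hx'
  have := hx x hx'
  rcases x with _ | _ | a | a
  · exact this.elim
  · exact h'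
  · exact h a
  · exact this.elim

/-- carry the letter `a` to the right end and turn around -/
theorem carry (a : Fin 4) (xs L : List Sym) (h : ∀ x ∈ xs, nb x) :
    RG 0 (cfg (.R a) L xs) (cfgL (.S a) (xs.reverse ++ L) []) := by
  refine RG.trans0 (sweepR0 xs L ?_) ((endL rfl _).mono (by omega))
  intro x hx
  have := h x hx
  rcases x with _ | _ | b | b <;> first | rfl | exact this.elim

theorem W4_sweep (um ur : List (Fin 4)) (Z R) :
    RG 0 (cfgL .W4 (mks um ++ lts ur ++ .sep :: Z) R)
      (cfgL .P Z (.sep :: (lts (um ++ ur)).reverse ++ R)) := by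
  have h1 := sweepL (q := .W4) unm (mks um ++ lts ur) (.sep :: Z) R (by
    intro x hx A R
    rcases List.mem_append.1 hx with hx | hx
    · obtain ⟨a, _, rfl⟩ := List.mem_map.1 hx
      exact (goWL (y := .lt a) rfl A R).trans0 ((goL rfl A R).mono (by omega))
    · obtain ⟨a, _, rfl⟩ := List.mem_map.1 hx
      exact (goL rfl A R).mono (by omega))
  refine RG.trans0 h1 (RG.mono (?_ : RG 1 _ _) (by omega))
  have := goL (q := .W4) (x := .sep) (q' := .P) rfl Z
    ((List.map unm (mks um ++ lts ur)).reverse ++ R)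
  simpa [unm_comp_lt, unm_comp_mk, lts, mks] using this

/-- The matching loop: the letter `a` of the block `um ++ a :: ur` (with `um ++ [a]` marked) is
looked for in the rest `wr` of the last block `wm ++ wr`. -/
theorem match_loop (mid Z : List Sym) (hmid : ∀ x ∈ mid, clean x) (wr : List (Fin 4)) :
    ∀ (wm um : List (Fin 4)) (a : Fin 4) (ur : List (Fin 4)),
    ((a :: ur).Sublist wr →
      RG 0 (cfgL (.S a) (lts wr ++ .sep :: mid ++ mks um ++ .mk a :: lts ur ++ .sep :: Z)
        (mks wm).reverse)
        (cfg .B1 (lts (wm ++ wr) ++ .sep :: mid ++ lts (um ++ a :: ur) ++ .sep :: Z) [])) ∧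
    (¬ (a :: ur).Sublist wr →
      RG 0 (cfgL (.S a) (lts wr ++ .sep :: mid ++ mks um ++ .mk a :: lts ur ++ .sep :: Z)
        (mks wm).reverse)
        (cfgL .P Z (lts (wm ++ wr) ++ Sym.sep :: mid ++ lts (um ++ a :: ur) ++ [Sym.sep]).reverse)) := by
  induction wr with
  | nil =>
    intro wm um a ur
    refine ⟨fun h => by simp at h, fun _ => ?_⟩
    have h1 := goR (q := .S a) (x := .sep) (q' := .V) rfl
      (mid ++ mks um ++ .mk a :: lts ur ++ .sep :: Z) (mks wm).reverse
    have h2 := sweepR (q := .V) unm (mks wm).reverse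
      (.sep :: (mid ++ mks um ++ .mk a :: lts ur ++ .sep :: Z)) [] (by
        intro x hx L R
        obtain ⟨b, _, rfl⟩ := List.mem_map.1 (List.mem_reverse.1 hx)
        exact (goW (y := .lt b) rfl L R).trans0 ((goR rfl L R).mono (by omega)))
    have h3 := endL (q := .V) (q' := .W2) rfl (lts wm ++
      .sep :: (mid ++ mks um ++ .mk a :: lts ur ++ .sep :: Z))
    have h4 := goCs (q := .W2) (lts wm ++ .sep :: mid) (by
      intro x hx
      simp only [List.mem_append, List.mem_cons] at hx
      rcases hx with hx | rfl | hx
      · exact clean_lts _ _ hx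
      · trivial
      · exact hmid x hx) (fun _ => rfl) rfl (mks um ++ .mk a :: lts ur ++ .sep :: Z) []
    have h5 : RG 0 (cfgL .W2 (mks um ++ .mk a :: lts ur ++ .sep :: Z)
        ((lts wm ++ .sep :: mid).reverse ++ []))
        (cfgL .P Z (.sep :: (lts (um ++ a :: ur)).reverse ++
          ((lts wm ++ .sep :: mid).reverse ++ []))) := by
      rcases um with _ | ⟨b, um⟩
      · have e1 := goWL (q := .W2) (x := .mk a) (q' := .W4) (y := .lt a) rfl
          (lts ur ++ .sep :: Z) ((lts wm ++ .sep :: mid).reverse ++ [])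
        have e2 := W4_sweep [] (a :: ur) Z ((lts wm ++ .sep :: mid).reverse ++ [])
        exact e1.trans0 e2
      · have e1 := goWL (q := .W2) (x := .mk b) (q' := .W4) (y := .lt b) rfl
          (mks um ++ .mk a :: lts ur ++ .sep :: Z) ((lts wm ++ .sep :: mid).reverse ++ [])
        have e2 := goL (q := .W4) (x := .lt b) (q' := .W4) rfl
          (mks um ++ .mk a :: lts ur ++ .sep :: Z) ((lts wm ++ .sep :: mid).reverse ++ [])
        have e3 := W4_sweep (um ++ [a]) ur Z
          (.lt b :: ((lts wm ++ .sep :: mid).reverse ++ []))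
        refine e1.trans0 (e2.trans0 ?_)
        simpa [mks, lts] using e3
    rw [List.append_nil] at h2
    have h12 := h1.trans0 h2
    simp only [List.map_reverse, unm_mks, List.reverse_reverse] at h12
    have h35 := h3.trans0 (by simpa using h4.trans0 h5)
    have := h12.trans0 h35
    simpa [lts, cfgL] using this
  | cons b wr ih =>
    intro wm um a ur
    by_cases hab : a = b
    · subst hab
      rw [List.cons_sublist_cons]
      -- the letter is found
      have h1 := goWL (q := .S a) (x := .lt a) (q' := .L1) (y := .mk a) (by simp [delta])
        (lts wr ++ .sep :: mid ++ mks um ++ .mk a :: lts ur ++ .sep :: Z) (mks wm).reverse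
      have h2 := goL (q := .L1) (x := .mk a) (q' := .L2) rfl
        (lts wr ++ .sep :: mid ++ mks um ++ .mk a :: lts ur ++ .sep :: Z) (mks wm).reverse
      have h3 := goCs (q := .L2) (lts wr ++ .sep :: mid) (by
        intro x hx
        simp only [List.mem_append, List.mem_cons] at hx
        rcases hx with hx | rfl | hx
        · exact clean_lts _ _ hx
        · trivial
        · exact hmid x hx) (fun _ => rfl) rfl (mks um ++ .mk a :: lts ur ++ .sep :: Z)
        (.mk a :: (mks wm).reverse)
      have h4 : RG 0 (cfgL .L2 (mks um ++ .mk a :: lts ur ++ .sep :: Z)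
          ((lts wr ++ .sep :: mid).reverse ++ (.mk a :: (mks wm).reverse)))
          (cfgL .L3 (lts ur ++ .sep :: Z) ((mks (um ++ [a])).reverse ++
            ((lts wr ++ .sep :: mid).reverse ++ (.mk a :: (mks wm).reverse)))) := by
        rcases um with _ | ⟨c, um⟩
        · exact (goL (q := .L2) (x := .mk a) (q' := .L3) rfl _ _).mono (by omega)
        · have e1 := goL (q := .L2) (x := .mk c) (q' := .L3) rfl
            (mks um ++ .mk a :: lts ur ++ .sep :: Z)
            ((lts wr ++ .sep :: mid).reverse ++ (.mk a :: (mks wm).reverse))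
          have e2 := goMs (q := .L3) (um ++ [a]) (fun _ => rfl) (lts ur ++ .sep :: Z)
            (.mk c :: ((lts wr ++ .sep :: mid).reverse ++ (.mk a :: (mks wm).reverse)))
          refine e1.trans0 ?_
          simpa [mks] using e2
      have h14 : RG 0 (cfgL (.S a) (lts (a :: wr) ++ .sep :: mid ++ mks um ++
          .mk a :: lts ur ++ .sep :: Z) (mks wm).reverse)
          (cfgL .L3 (lts ur ++ .sep :: Z) ((mks (um ++ [a])).reverse ++
            ((lts wr ++ .sep :: mid).reverse ++ (.mk a :: (mks wm).reverse)))) := by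
        refine RG.trans0 (by simpa [lts] using h1) (h2.trans0 ?_)
        refine RG.trans0 (m := 0) ?_ h4
        simpa using h3
      rcases ur with _ | ⟨c, ur⟩
      · refine ⟨fun _ => ?_, fun h => absurd (List.nil_sublist _) h⟩
        refine h14.trans0 ?_
        have e1 := goR (q := .L3) (x := .sep) (q' := .X) rfl Z ((mks (um ++ [a])).reverse ++
            ((lts wr ++ .sep :: mid).reverse ++ (.mk a :: (mks wm).reverse)))
        have e2 := sweepU (q := .X) (Or.inr rfl) ((mks (um ++ [a])).reverse ++
            ((lts wr ++ .sep :: mid).reverse ++ (.mk a :: (mks wm).reverse))) (.sep :: Z) (by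
          intro x hx
          simp only [List.mem_append, List.mem_cons, List.mem_reverse] at hx
          rcases hx with hx | (hx | rfl | hx) | rfl | hx
          · exact nb_mks _ _ hx
          · exact nb_lts _ _ hx
          · trivial
          · exact nb_of_clean (hmid x hx)
          · trivial
          · exact nb_mks _ _ hx)
        refine RG.trans0 e1 ?_
        refine RG.trans0 e2 ?_
        have e3 := endW (q := .X) (q' := .B1) (y := .blank) rfl
          (lts (wm ++ a :: wr) ++ .sep :: mid ++ lts (um ++ [a]) ++ .sep :: Z)
        rw [show ∀ A, cfgL .B1 (.blank :: A) [] = cfg .B1 A [] from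
          fun A => (cfg_end _ A).symm] at e3
        refine RG.mono ?_ (Nat.zero_le 1)
        simpa [unm_comp_lt, unm_comp_mk, unm_clean mid hmid, List.map_reverse, lts, mks, unm]
          using e3
      · have e1 := goWL (q := .L3) (x := .lt c) (q' := .R c) (y := .mk c) rfl
          (lts ur ++ .sep :: Z) ((mks (um ++ [a])).reverse ++
            ((lts wr ++ .sep :: mid).reverse ++ (.mk a :: (mks wm).reverse)))
        have e2 := carry c (.mk c :: ((mks (um ++ [a])).reverse ++
            ((lts wr ++ .sep :: mid).reverse ++ (.mk a :: (mks wm).reverse))))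
            (lts ur ++ .sep :: Z) (by
          intro x hx
          simp only [List.mem_append, List.mem_cons, List.mem_reverse] at hx
          rcases hx with rfl | hx | (hx | rfl | hx) | rfl | hx
          · trivial
          · exact nb_mks _ _ hx
          · exact nb_lts _ _ hx
          · trivial
          · exact nb_of_clean (hmid x hx)
          · trivial
          · exact nb_mks _ _ hx)
        have e3 := goMs (q := .S c) (wm ++ [a]) (fun _ => rfl)
          (lts wr ++ .sep :: mid ++ mks (um ++ [a]) ++ .mk c :: lts ur ++ .sep :: Z) []
        have e123 : RG 0 (cfgL .L3 (lts (c :: ur) ++ .sep :: Z) ((mks (um ++ [a])).reverse ++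
            ((lts wr ++ .sep :: mid).reverse ++ (.mk a :: (mks wm).reverse))))
            (cfgL (.S c) (lts wr ++ .sep :: mid ++ mks (um ++ [a]) ++ .mk c :: lts ur ++ .sep :: Z)
              (mks (wm ++ [a])).reverse) := by
          refine RG.trans0 e1 (RG.trans0 e2 ?_)
          simpa [mks, lts] using e3
        have ih := ih (wm ++ [a]) (um ++ [a]) c ur
        simp only [List.append_assoc, List.cons_append, List.nil_append] at ih h14 e123 ⊢
        exact ⟨fun h => h14.trans0 (e123.trans0 (ih.1 h)),
          fun h => h14.trans0 (e123.trans0 (ih.2 h))⟩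
    · have hs : (a :: ur).Sublist (b :: wr) ↔ (a :: ur).Sublist wr := by
        constructor
        · intro h
          cases h with
          | cons _ h => exact h
          | cons_cons _ h => exact absurd rfl hab
        · intro h
          exact h.cons _
      rw [hs]
      have h1 := goWL (q := .S a) (x := .lt b) (q' := .S a) (y := .mk b) (by simp [delta, hab])
        (lts wr ++ .sep :: mid ++ mks um ++ .mk a :: lts ur ++ .sep :: Z) (mks wm).reverse
      have h2 := goL (q := .S a) (x := .mk b) (q' := .S a) rfl
        (lts wr ++ .sep :: mid ++ mks um ++ .mk a :: lts ur ++ .sep :: Z) (mks wm).reverse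
      have h12 := h1.trans h2
      have ih := ih (wm ++ [b]) um a ur
      have hr : (mks (wm ++ [b])).reverse = .mk b :: (mks wm).reverse := by simp [mks]
      rw [hr] at ih
      simp only [List.append_assoc, List.cons_append, List.nil_append] at ih h12 ⊢
      exact ⟨fun h => h12.trans0 (ih.1 h), fun h => h12.trans0 (ih.2 h)⟩

/-- The loop over the earlier blocks. -/
theorem check_loop (w : List (Fin 4)) (L : List (List (Fin 4))) :
    ∀ (mid : List Sym), (∀ x ∈ mid, clean x) → (∀ u ∈ L, u ≠ []) →
    ((∃ u ∈ L, u.Sublist w) →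
      RG 0 (cfgL .P (stk L) (lts w ++ .sep :: mid).reverse)
        (cfg .B1 (lts w ++ .sep :: mid ++ stk L) [])) ∧
    ((∀ u ∈ L, ¬ u.Sublist w) →
      RG 0 (cfgL .P (stk L) (lts w ++ .sep :: mid).reverse)
        (cfg .E (lts w ++ .sep :: mid ++ stk L) [])) := by
  induction L with
  | nil =>
    intro mid hmid _
    refine ⟨fun ⟨u, hu, _⟩ => by simp at hu, fun _ => ?_⟩
    have h1 := goR (q := .P) (x := .blank) (q' := .E) rfl [] (lts w ++ .sep :: mid).reverse
    rw [show [Sym.blank] = [] ++ [.blank] from rfl, cfg_blankL] at h1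
    have h2 := sweepR0 (q := .E) (lts w ++ .sep :: mid).reverse [] (by
      intro x hx
      have : clean x := by
        simp only [List.mem_append, List.mem_cons, List.mem_reverse] at hx
        rcases hx with hx | rfl | hx
        · exact clean_lts _ _ hx
        · trivial
        · exact hmid x hx
      rcases x with _ | _ | a | a <;> first | rfl | exact this.elim)
    have := h1.trans0 h2
    simpa [stk, cfgL] using this
  | cons u L ih =>
    intro mid hmid hL
    obtain ⟨a, ur, rfl⟩ := List.exists_cons_of_ne_nil (hL u (by simp))
    have h1 := goWL (q := .P) (x := .lt a) (q' := .R a) (y := .mk a) rfl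
      (lts ur ++ .sep :: stk L) (lts w ++ .sep :: mid).reverse
    have h2 := carry a (.mk a :: (lts w ++ .sep :: mid).reverse) (lts ur ++ .sep :: stk L) (by
      intro x hx
      simp only [List.mem_append, List.mem_cons, List.mem_reverse] at hx
      rcases hx with rfl | hx | rfl | hx
      · trivial
      · exact nb_lts _ _ hx
      · trivial
      · exact nb_of_clean (hmid x hx))
    have h12 : RG 0 _ _ := RG.trans0 h1 h2
    obtain ⟨m1, m2⟩ := match_loop mid (stk L) hmid w [] [] a ur
    have ih := ih (mid ++ lts (a :: ur) ++ [.sep]) (by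
      intro x hx
      simp only [List.mem_append, List.mem_singleton] at hx
      rcases hx with (hx | hx) | rfl
      · exact hmid x hx
      · exact clean_lts _ _ hx
      · trivial) (fun v hv => hL v (by simp [hv]))
    simp [lts, mks, stk] at h12 m1 m2 ih ⊢
    by_cases hs : (a :: ur).Sublist w
    · exact ⟨fun _ => h12.trans0 (m1 hs), fun h => absurd hs h⟩
    · refine ⟨fun h => ?_, fun _ h => h12.trans0 ((m2 hs).trans0 (ih.2 h))⟩
      rcases h with h | ⟨v, hv, hvw⟩
      · exact absurd h hs
      · exact h12.trans0 ((m2 hs).trans0 (ih.1 v hv hvw))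

/-- From the canonical start of a check to the loop over the blocks. -/
theorem check_start (w : List (Fin 4)) (L) :
    RG 1 (cfg .U (stk (w :: L)) []) (cfgL .P (stk L) (lts w ++ [Sym.sep]).reverse) := by
  have h1 := endL (q := .U) (q' := .K) rfl (stk (w :: L))
  have h2 := goLs (q := .K) w (fun _ => rfl) (.sep :: stk L) []
  have h3 := goL (q := .K) (x := .sep) (q' := .P) rfl (stk L) ((lts w).reverse ++ [])
  have := (h1.trans (RG.trans h2 h3)).mono (n := 1) (by omega)
  simpa using this

theorem check_bad (w : List (Fin 4)) (L) (hL : ∀ u ∈ L, u ≠ []) (h : ∃ u ∈ L, u.Sublist w) :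
    RG 0 (cfg .U (stk (w :: L)) []) (cfg .B1 (stk (w :: L)) []) := by
  have := (check_start w L).trans0 ((check_loop w L [] (by simp) hL).1 h)
  simpa [stk] using this

theorem copy_loop (Z : List Sym) (wr : List (Fin 4)) : ∀ wm : List (Fin 4),
    RG 0 (cfgL .H (lts (List.replicate (wm.length + 1) 0) ++ .sep :: mks wm ++ lts wr ++ .sep :: Z)
      []) (cfg .U (lts (List.replicate (wm.length + wr.length + 1) 0) ++
        .sep :: lts (wm ++ wr) ++ .sep :: Z) []) := by
  induction wr with
  | nil =>
    intro wm
    have h1 := goLs (q := .H) (List.replicate (wm.length + 1) 0) (fun _ => rfl)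
      (.sep :: (mks wm ++ .sep :: Z)) []
    have h2 := goL (q := .H) (x := .sep) (q' := .C) rfl (mks wm ++ .sep :: Z)
      ((lts (List.replicate (wm.length + 1) 0)).reverse ++ [])
    have h3 := goMs (q := .C) wm (fun _ => rfl) (.sep :: Z)
      (.sep :: ((lts (List.replicate (wm.length + 1) 0)).reverse ++ []))
    have h4 := goR (q := .C) (x := .sep) (q' := .U) rfl Z ((mks wm).reverse ++
      (.sep :: ((lts (List.replicate (wm.length + 1) 0)).reverse ++ [])))
    have h5 := sweepU (q := .U) (Or.inl rfl) ((mks wm).reverse ++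
      (.sep :: ((lts (List.replicate (wm.length + 1) 0)).reverse ++ []))) (.sep :: Z) (by
        intro x hx
        simp only [List.mem_append, List.mem_cons, List.mem_reverse, List.append_nil] at hx
        rcases hx with hx | rfl | hx
        · exact nb_mks _ _ hx
        · trivial
        · exact nb_lts _ _ hx)
    have h45 : RG 0 (cfgL .C (.sep :: Z) ((mks wm).reverse ++
      (.sep :: ((lts (List.replicate (wm.length + 1) 0)).reverse ++ [])))) _ := RG.trans0 h4 h5
    have := h1.trans0 (h2.trans0 (h3.trans0 h45))
    simp only [List.map_append, List.map_cons, List.map_reverse, unm_mks, unm_lts, unm_sep,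
      List.append_nil, List.reverse_append, List.reverse_cons, List.reverse_reverse] at this
    simpa [lts] using this
  | cons c wr ih =>
    intro wm
    have h1 := goLs (q := .H) (List.replicate (wm.length + 1) 0) (fun _ => rfl)
      (.sep :: (mks wm ++ .lt c :: lts wr ++ .sep :: Z)) []
    have h2 := goL (q := .H) (x := .sep) (q' := .C) rfl (mks wm ++ .lt c :: lts wr ++ .sep :: Z)
      ((lts (List.replicate (wm.length + 1) 0)).reverse ++ [])
    have h3 := goMs (q := .C) wm (fun _ => rfl) (.lt c :: lts wr ++ .sep :: Z)
      (.sep :: ((lts (List.replicate (wm.length + 1) 0)).reverse ++ []))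
    have h4 := goWL (q := .C) (x := .lt c) (q' := .G) (y := .mk c) rfl (lts wr ++ .sep :: Z)
      ((mks wm).reverse ++ (.sep :: ((lts (List.replicate (wm.length + 1) 0)).reverse ++ [])))
    have h5 := sweepR0 (q := .G) (.mk c :: ((mks wm).reverse ++
      (.sep :: ((lts (List.replicate (wm.length + 1) 0)).reverse ++ [])))) (lts wr ++ .sep :: Z) (by
        intro x hx
        have : nb x := by
          simp only [List.mem_append, List.mem_cons, List.mem_reverse, List.append_nil] at hx
          rcases hx with rfl | hx | rfl | hx
          · trivial
          · exact nb_mks _ _ hx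
          · trivial
          · exact nb_lts _ _ hx
        rcases x with _ | _ | a | a <;> first | rfl | exact this.elim)
    have h45 : RG 0 (cfgL .C (.lt c :: (lts wr ++ .sep :: Z)) ((mks wm).reverse ++
      (.sep :: ((lts (List.replicate (wm.length + 1) 0)).reverse ++ [])))) _ := RG.trans0 h4 h5
    have h6 := endW (q := .G) (q' := .H) (y := .lt 0) rfl
      ((Sym.mk c :: ((mks wm).reverse ++
      (Sym.sep :: ((lts (List.replicate (wm.length + 1) 0)).reverse ++ [])))).reverse ++
        (lts wr ++ .sep :: Z))
    have h26 := h2.trans0 (RG.trans0 (by simpa using h3) (RG.trans0 (by simpa using h45) h6))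
    have h16 := RG.trans0 h1 (by simpa using h26)
    have ih := ih (wm ++ [c])
    have e : (wm ++ [c]).length + wr.length + 1 = wm.length + (c :: wr).length + 1 := by
      simp; omega
    rw [e] at ih
    have e2 : lts (List.replicate ((wm ++ [c]).length + 1) 0) =
        .lt 0 :: lts (List.replicate (wm.length + 1) 0) := by
      simp [lts, List.replicate_succ]
    rw [e2] at ih
    have e3 : (lts (List.replicate (wm.length + 1) 0)).reverse =
      lts (List.replicate (wm.length + 1) 0) := by simp [lts]
    have fin := h16.trans0 (c := (cfg .U (lts (List.replicate (wm.length + (c :: wr).length + 1) 0)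
      ++ .sep :: lts (wm ++ c :: wr) ++ .sep :: Z) [])) (n := 0) (by
        refine RG.mono (m := 0) ?_ le_rfl
        simpa [mks, lts, e3] using ih)
    simpa [mks, lts] using fin

theorem check_ok (w : List (Fin 4)) (L) (hL : ∀ u ∈ L, u ≠ []) (h : ∀ u ∈ L, ¬ u.Sublist w) :
    RG 3 (cfg .U (stk (w :: L)) []) (cfg .U (stk (List.replicate (w.length + 1) 0 :: w :: L)) []) := by
  have h0 := (check_start w L).trans ((check_loop w L [] (by simp) hL).2 h)
  have h1 := endW (q := .E) (q' := .G) (y := .sep) rfl (stk (w :: L))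
  have h2 := goR (q := .G) (x := .sep) (q' := .G) rfl (stk (w :: L)) []
  have h3 := endW (q := .G) (q' := .H) (y := .lt 0) rfl (.sep :: stk (w :: L))
  have h4 := copy_loop (stk L) w []
  have h03 : RG 3 _ _ := ((RG.trans (b := cfg .E (stk (w :: L)) [])
    (by simpa [stk] using h0) (RG.trans h1 (RG.trans h2 h3)))).mono (by omega)
  have := h03.trans (c := cfg .U (stk (List.replicate (w.length + 1) 0 :: w :: L)) []) (n := 0)
    (by simpa [stk, lts, mks] using h4)
  exact this

/-- Odometer increment (least significant digit first). -/
def inc : List (Fin 4) → Option (List (Fin 4))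
  | [] => none
  | a :: w => if a = 3 then (inc w).map (fun v => 0 :: v) else some ((a + 1) :: w)

def val : List (Fin 4) → ℕ
  | [] => 0
  | a :: w => a.val + 4 * val w

theorem val_lt (w) : val w < 4 ^ w.length := by
  induction w with
  | nil => simp [val]
  | cons a w ih => simp only [val, List.length_cons, pow_succ]; omega

theorem val_inj : ∀ (v w : List (Fin 4)), v.length = w.length → val v = val w → v = w := by
  intro v
  induction v with
  | nil => intro w h _; simp at h; exact (List.length_eq_zero_iff.1 h.symm).symm
  | cons a v ih =>
    intro w h hv
    rcases w with _ | ⟨b, w⟩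
    · simp at h
    · simp only [val] at hv
      have h1 : a = b := Fin.ext (by omega)
      rw [h1, ih w (by simpa using h) (by omega)]

theorem inc_some {w v} (h : inc w = some v) : v.length = w.length ∧ val v = val w + 1 := by
  induction w generalizing v with
  | nil => simp [inc] at h
  | cons a w ih =>
    simp only [inc] at h
    split_ifs at h with ha
    · obtain ⟨u, hu, rfl⟩ := Option.map_eq_some_iff.1 h
      obtain ⟨h1, h2⟩ := ih hu
      refine ⟨by simp [h1], ?_⟩
      simp only [val, h2, ha]
      simp
      omega
    · cases h
      refine ⟨by simp, ?_⟩
      simp only [val]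
      have : (a + 1).val = a.val + 1 := by revert ha; revert a; decide
      omega

theorem inc_none {w} (h : inc w = none) : val w + 1 = 4 ^ w.length := by
  induction w with
  | nil => simp [val]
  | cons a w ih =>
    simp only [inc] at h
    split_ifs at h with ha
    · have := ih (by simpa using h)
      simp only [val, List.length_cons, pow_succ, ha]
      simp
      omega

theorem back_some (w : List (Fin 4)) : ∀ (v : List (Fin 4)) (Z k), inc w = some v →
    RG 0 (cfgL .B (lts w ++ .sep :: Z) (lts (List.replicate k 0)))
      (cfg .U (lts (List.replicate k 0) ++ lts v ++ .sep :: Z) []) := by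
  induction w with
  | nil => intro v Z k h; simp [inc] at h
  | cons a w ih =>
    intro v Z k h
    simp only [inc] at h
    split_ifs at h with ha
    · obtain ⟨u, hu, rfl⟩ := Option.map_eq_some_iff.1 h
      have h1 := goWL (q := .B) (x := .lt a) (q' := .B1) (y := .lt 0) (by simp [delta, ha])
        (lts w ++ .sep :: Z) (lts (List.replicate k 0))
      have h2 := goL (q := .B1) (x := .lt 0) (q' := .B) rfl
        (lts w ++ .sep :: Z) (lts (List.replicate k 0))
      have h3 := ih u Z (k + 1) hu
      have e : lts (List.replicate (k + 1) 0) = lts (List.replicate k 0) ++ [.lt 0] := by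
        simp [lts, List.replicate_succ']
      have e' : lts (List.replicate (k + 1) 0) = .lt 0 :: lts (List.replicate k 0) := by
        simp [lts, List.replicate_succ]
      have h3' : RG 0 (cfgL .B (lts w ++ .sep :: Z) (.lt 0 :: lts (List.replicate k 0)))
          (cfg .U (lts (List.replicate k 0) ++ [.lt 0] ++ lts u ++ .sep :: Z) []) := by
        rw [← e, ← e']; exact h3
      have := RG.trans0 h1 (RG.trans0 h2 h3')
      simpa [lts] using this
    · cases h
      have h1 := goWL (q := .B) (x := .lt a) (q' := .U) (y := .lt (a + 1)) (by simp [delta, ha])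
        (lts w ++ .sep :: Z) (lts (List.replicate k 0))
      have h2 := sweepU (q := .U) (Or.inl rfl) (lts ((a + 1) :: List.replicate k 0))
        (lts w ++ .sep :: Z) (nb_lts _)
      rw [unm_lts] at h2
      have := RG.trans0 h1 h2
      simpa [lts] using this

theorem erase_loop (Z : List Sym) (k : ℕ) :
    RG 0 (cfgL .D2 (lts (List.replicate k 0) ++ .sep :: Z) []) (cfg .B1 Z []) := by
  induction k with
  | zero =>
    have h := goWL (q := .D2) (x := .sep) (q' := .B1) (y := .blank) rfl Z []
    rw [show cfgL .B1 (.blank :: Z) [] = cfg .B1 Z [] from (cfg_end _ Z).symm] at h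
    exact h.mono (by omega)
  | succ k ih =>
    have h1 := goWL (q := .D2) (x := .lt 0) (q' := .D2) (y := .blank) rfl
      (lts (List.replicate k 0) ++ .sep :: Z) []
    have h2 := goL (q := .D2) (x := .blank) (q' := .D2) rfl
      (lts (List.replicate k 0) ++ .sep :: Z) []
    rw [show [Sym.blank] = [] ++ [.blank] from rfl, cfgL_blankR] at h2
    have := h1.trans0 (h2.trans0 ih)
    simpa [lts, List.replicate_succ] using this

theorem back_none (w : List (Fin 4)) : ∀ (Z k), inc w = none →
    RG 0 (cfgL .B (lts w ++ .sep :: Z) (lts (List.replicate k 0))) (cfg .B1 Z []) := by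
  induction w with
  | nil =>
    intro Z k _
    have h1 := goR (q := .B) (x := .sep) (q' := .D1) rfl Z (lts (List.replicate k 0))
    have h2 := sweepR0 (q := .D1) (lts (List.replicate k 0)) (.sep :: Z) (by
      intro x hx
      obtain ⟨a, _, rfl⟩ := List.mem_map.1 hx
      rfl)
    have e3 : (lts (List.replicate k 0)).reverse = lts (List.replicate k 0) := by simp [lts]
    rw [e3] at h2
    have h3 := endL (q := .D1) (q' := .D2) rfl (lts (List.replicate k 0) ++ .sep :: Z)
    exact RG.trans0 h1 (h2.trans0 (h3.trans0 (erase_loop Z k)))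
  | cons a w ih =>
    intro Z k h
    simp only [inc] at h
    split_ifs at h with ha
    · have h1 := goWL (q := .B) (x := .lt a) (q' := .B1) (y := .lt 0) (by simp [delta, ha])
        (lts w ++ .sep :: Z) (lts (List.replicate k 0))
      have h2 := goL (q := .B1) (x := .lt 0) (q' := .B) rfl
        (lts w ++ .sep :: Z) (lts (List.replicate k 0))
      have h3 := ih Z (k + 1) (by simpa using h)
      exact RG.trans0 h1 (RG.trans0 h2 (by simpa [lts, List.replicate_succ] using h3))

theorem back_inc {w v} (L) (h : inc w = some v) :
    RG 0 (cfg .B1 (stk (w :: L)) []) (cfg .U (stk (v :: L)) []) := by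
  have h1 := endL (q := .B1) (q' := .B) rfl (stk (w :: L))
  exact h1.trans0 (back_some w v (stk L) 0 h)

theorem back_ovf {w} (L) (h : inc w = none) :
    RG 0 (cfg .B1 (stk (w :: L)) []) (cfg .B1 (stk L) []) := by
  have h1 := endL (q := .B1) (q' := .B) rfl (stk (w :: L))
  exact h1.trans0 (back_none w (stk L) 0 h)

/-! ### The search tree -/

/-- No earlier block (further down the list) embeds into a later one. -/
def Bad (L : List (List (Fin 4))) : Prop := L.Pairwise (fun w u => ¬ u.Sublist w)

/-- The `k`-th block has length `k + 1`. -/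
def LenOK : List (List (Fin 4)) → Prop
  | [] => True
  | w :: L => w.length = L.length + 2 ∧ LenOK L

theorem LenOK.ne_nil {L} (h : LenOK L) : ∀ u ∈ L, u ≠ [] := by
  induction L with
  | nil => simp
  | cons w L ih =>
    intro u hu
    rcases List.mem_cons.1 hu with rfl | hu
    · rintro rfl
      simp [LenOK] at h
    · exact ih h.2 u hu

theorem LenOK.of_append {M L} (h : LenOK (M ++ L)) : LenOK L := by
  induction M with
  | nil => exact h
  | cons w M ih => exact ih h.2

def Child (L' L : List (List (Fin 4))) : Prop := Bad L' ∧ ∃ w, L' = w :: L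

theorem higman (f : ℕ → List (Fin 4)) : ∃ m n, m < n ∧ (f m).Sublist (f n) := by
  have h := Set.PartiallyWellOrderedOn.partiallyWellOrderedOn_sublistForall₂
    (α := Fin 4) (· = ·) (s := Set.univ) (Set.finite_univ.partiallyWellOrderedOn)
  obtain ⟨m, n, hmn, hs⟩ := h (fun n => ⟨f n, fun _ _ => Set.mem_univ _⟩)
  obtain ⟨l, hl, hl'⟩ := List.sublistForall₂_iff.1 hs
  rw [List.forall₂_eq_eq_eq] at hl
  have hl2 : f m = l := hl
  exact ⟨m, n, hmn, by rw [hl2]; exact hl'⟩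

theorem child_wf : WellFounded Child := by
  rw [wellFounded_iff_isEmpty_descending_chain]
  refine ⟨fun ⟨f, hf⟩ => ?_⟩
  choose hb g hg using hf
  obtain ⟨m, n, hmn, hs⟩ := higman g
  have key : ∀ k, m < k → g m ∈ f k := by
    intro k hk
    induction k with
    | zero => omega
    | succ k ih =>
      rw [hg k]
      rcases Nat.lt_or_eq_of_le (Nat.le_of_lt_succ hk) with h | h
      · exact List.mem_cons_of_mem _ (ih h)
      · subst h; simp
  have h1 := hb n
  rw [hg n] at h1
  exact (List.pairwise_cons.1 h1).1 _ (key n hmn) hs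

theorem val_replicate (k) : val (List.replicate k 0) = 0 := by
  induction k with
  | zero => rfl
  | succ k ih => simp [List.replicate_succ, val, ih]

theorem search (L : List (List (Fin 4))) : Bad L → LenOK L →
    ∃ t, RG t (cfg .U (stk (List.replicate (L.length + 2) 0 :: L)) []) (cfg .B1 (stk L) []) ∧
      ∀ M, Bad (M ++ L) → LenOK (M ++ L) → 3 * M.length ≤ t := by
  induction L using child_wf.induction with
  | _ L IH =>
  intro hB hL
  have inner : ∀ r, ∀ w : List (Fin 4), w.length = L.length + 2 → 4 ^ (L.length + 2) - val w = r →
      ∃ t, RG t (cfg .U (stk (w :: L)) []) (cfg .B1 (stk L) []) ∧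
      ∀ M v, val w ≤ val v → Bad (M ++ v :: L) → LenOK (M ++ v :: L) → 3 * (M.length + 1) ≤ t := by
    intro r
    induction r with
    | zero =>
      intro w hw hr
      have := val_lt w
      rw [hw] at this
      omega
    | succ r ihr =>
      intro w hw hr
      -- first part: the subtree below `w`
      have first : ∃ t, RG t (cfg .U (stk (w :: L)) []) (cfg .B1 (stk (w :: L)) []) ∧
          ∀ M, Bad (M ++ w :: L) → LenOK (M ++ w :: L) → 3 * (M.length + 1) ≤ t := by
        by_cases hbad : ∀ u ∈ L, ¬ u.Sublist w
        · have hB' : Bad (w :: L) := List.pairwise_cons.2 ⟨hbad, hB⟩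
          obtain ⟨t, ht, hM⟩ := IH (w :: L) ⟨hB', w, rfl⟩ hB' ⟨hw, hL⟩
          have h1 := check_ok w L hL.ne_nil hbad
          have e : w.length + 1 = (w :: L).length + 2 := by simp [hw]
          rw [e] at h1
          refine ⟨3 + t, h1.trans ht, fun M h1 h2 => ?_⟩
          have := hM M h1 h2
          omega
        · push Not at hbad
          refine ⟨0, check_bad w L hL.ne_nil hbad, fun M h1 h2 => ?_⟩
          exfalso
          obtain ⟨u, hu, hs⟩ := hbad
          have := (List.pairwise_append.1 h1).2.1
          exact (List.pairwise_cons.1 this).1 u hu hs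
      obtain ⟨t1, ht1, hM1⟩ := first
      have lenv : ∀ M v, LenOK (M ++ v :: L) → v.length = w.length := by
        intro M v h
        have := h.of_append
        rw [hw]
        exact this.1
      cases hi : inc w with
      | none =>
        refine ⟨t1, (ht1.trans (back_ovf L hi)).mono (by omega), fun M v hv h1 h2 => ?_⟩
        have e1 := inc_none hi
        have e2 := val_lt v
        have e3 := lenv M v h2
        rw [e3] at e2
        have : v = w := val_inj _ _ e3 (by omega)
        subst this
        exact hM1 M h1 h2
      | some w' =>
        obtain ⟨e1, e2⟩ := inc_some hi
        obtain ⟨t2, ht2, hM2⟩ := ihr w' (by omega) (by omega)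
        refine ⟨t1 + t2, (ht1.trans ((back_inc L hi).trans ht2)).mono (by omega),
          fun M v hv h1 h2 => ?_⟩
        rcases Nat.lt_or_eq_of_le hv with h | h
        · have := hM2 M v (by omega) h1 h2
          omega
        · have : w = v := val_inj _ _ (lenv M v h2).symm h
          subst this
          have := hM1 M h1 h2
          omega
  obtain ⟨t, ht, hM⟩ := inner _ (List.replicate (L.length + 2) 0) (by simp) rfl
  refine ⟨t, ht, fun M h1 h2 => ?_⟩
  rcases List.eq_nil_or_concat M with rfl | ⟨M, v, rfl⟩
  · simp
  · have := hM M v (by simp [val_replicate]) (by simpa using h1) (by simpa using h2)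
    simpa using this

theorem init_run : RG 2 (TM0.init []) (cfg .U (stk [List.replicate 2 0]) []) := by
  have h0 : (TM0.init [] : TM0.Cfg (Fin 10) (Fin 47)) = cfg .I0 [] [] := rfl
  rw [h0]
  have h1 := endW (q := .I0) (q' := .I1) (y := .sep) rfl []
  have h2 := goR (q := .I1) (x := .sep) (q' := .I1) rfl [] []
  have h3 := endW (q := .I1) (q' := .I2) (y := .lt 0) rfl [.sep]
  have h4 := goR (q := .I2) (x := .lt 0) (q' := .I2) rfl [.sep] []
  have h5 := endW (q := .I2) (q' := .U) (y := .lt 0) rfl [.lt 0, .sep]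
  have h6 := goR (q := .U) (x := .lt 0) (q' := .U) rfl [.lt 0, .sep] []
  exact (RG.trans h1 (RG.trans h2 (RG.trans h3 (RG.trans h4 (RG.trans h5 h6))))).mono (by omega)

/-- The blocks of a word, as a stack. -/
def blocks (s : List (Fin 4)) : ℕ → List (List (Fin 4))
  | 0 => []
  | m + 1 => (friedmanBlock s (m + 1)).reverse :: blocks s m

theorem blocks_length (s m) : (blocks s m).length = m := by
  induction m with
  | zero => rfl
  | succ m ih => simp [blocks, ih]

theorem mem_blocks {s m u} (h : u ∈ blocks s m) :
    ∃ i, 1 ≤ i ∧ i ≤ m ∧ u = (friedmanBlock s i).reverse := by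
  induction m with
  | zero => simp [blocks] at h
  | succ m ih =>
    rcases List.mem_cons.1 h with rfl | h
    · exact ⟨m + 1, by omega, le_rfl, rfl⟩
    · obtain ⟨i, h1, h2, h3⟩ := ih h
      exact ⟨i, h1, by omega, h3⟩

theorem blocks_ok (s : List (Fin 4)) (hs : SatisfiesStar s) (m : ℕ) (hm : 2 * m ≤ s.length) :
    Bad (blocks s m) ∧ LenOK (blocks s m) := by
  induction m with
  | zero => exact ⟨List.Pairwise.nil, trivial⟩
  | succ m ih =>
    obtain ⟨h1, h2⟩ := ih (by omega)
    refine ⟨List.pairwise_cons.2 ⟨?_, h1⟩, ?_, h2⟩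
    · intro u hu hsub
      obtain ⟨i, hi1, hi2, rfl⟩ := mem_blocks hu
      exact hs i (m + 1) hi1 (by omega) hm (List.reverse_sublist.1 hsub)
    · simp [friedmanBlock, blocks_length]
      omega

end Friedman

/-- There is a Turing machine with 47 states and 10 tape symbols which halts on
the blank tape after more than n(4) steps. -/
theorem tm_47_10_exceeds_n4 :
    ∃ (M : Turing.TM0.Machine (Fin 10) (Fin 47)) (T : ℕ),
      HaltsIn M T ∧ friedmanN 4 < T := by
  obtain ⟨t, ht, hM⟩ := Friedman.search [] List.Pairwise.nil trivial
  have hend : Friedman.RG 1 (Friedman.cfg .B1 (Friedman.stk []) []) _ :=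
    Friedman.endL (q := .B1) (q' := .B) rfl []
  obtain ⟨T, hT, hrun⟩ := Friedman.init_run.trans (Friedman.RG.trans ht hend)
  refine ⟨Friedman.mach, T, ⟨_, hrun, Friedman.step_none rfl _ _⟩, ?_⟩
  have hle : friedmanN 4 ≤ t + 1 := by
    apply csSup_le'
    rintro n ⟨s, rfl, hs⟩
    obtain ⟨h1, h2⟩ := Friedman.blocks_ok s hs (s.length / 2) (by omega)
    have := hM (Friedman.blocks s (s.length / 2)) (by simpa using h1) (by simpa using h2)
    rw [Friedman.blocks_length] at this
    omega
  omega
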